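/- arXiv:1603.07580 — 6 statements merged into one kernel-verified Lean document; each statement's English description precedes it below -/
import Mathlib

section
/- Let ν be a Borel measure on ℝ^d, let 0 < α ≤ 1, r_0 > 1, 0 < ε ≤ 1 − r_0^{−α}, and let x ∈ ℝ^d with |x| ≥ r_0. Assume ν(B^c(0,1)) < ∞ and that y ↦ |y| is ν-integrable on the set A := {y : |y| ≥ 1 and r_0 < |y+x| < |x|}. Then ∫_{B^c(0,1)} [ (1 − |y+x|^{−α}) 1_{{|y+x| > r_0}}(y) + (1 − r_0^{−α} − ε) 1_{{|y+x| ≤ r_0}}(y) − (1 − |x|^{−α}) ] ν(dy) ≥ −(α/(r_0 |x|^α)) ∫_A |y| ν(dy) + (−1 + |x|^{−α}) · ν({y : |y| ≥ 1 and |y+x| ≤ r_0}). -/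
open MeasureTheory Real

lemma aux_bern {α r0 s R t : ℝ} (hα : 0 < α) (hα1 : α ≤ 1) (hr0 : 1 < r0) (hs : r0 < s)
    (hsR : s < R) (ht : R - s ≤ t) :
    s ^ (-α) - R ^ (-α) ≤ α / (r0 * R ^ α) * t := by
  have hs0 : 0 < s := by linarith
  have hR0 : 0 < R := by linarith
  have hRa : 0 < R ^ α := Real.rpow_pos_of_pos hR0 α
  have hsa : 0 < s ^ α := Real.rpow_pos_of_pos hs0 α
  have h1 : (R / s) ^ α ≤ 1 + α * (R / s - 1) := by
    have := rpow_one_add_le_one_add_mul_self (s := R / s - 1)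
      (by have : 0 < R / s := by positivity
          linarith) hα.le hα1
    simpa using this
  rw [Real.div_rpow hR0.le hs0.le] at h1
  rw [Real.rpow_neg hs0.le, Real.rpow_neg hR0.le]
  have h2 : (s ^ α)⁻¹ - (R ^ α)⁻¹ = (R ^ α)⁻¹ * (R ^ α / s ^ α - 1) := by
    field_simp
  have h3 : R / s - 1 ≤ t / r0 := by
    have : R / s - 1 = (R - s) / s := by field_simp
    rw [this]
    have : (0:ℝ) < R - s := by linarith
    exact div_le_div₀ (by linarith) ht (by linarith) hs.le
  have h4 : R ^ α / s ^ α - 1 ≤ α * (t / r0) := by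
    have := mul_le_mul_of_nonneg_left h3 hα.le
    linarith
  rw [h2]
  calc (R ^ α)⁻¹ * (R ^ α / s ^ α - 1) ≤ (R ^ α)⁻¹ * (α * (t / r0)) :=
        mul_le_mul_of_nonneg_left h4 (by positivity)
    _ = α / (r0 * R ^ α) * t := by field_simp

theorem stmt_3 (d : ℕ) (ν : Measure (EuclideanSpace ℝ (Fin d)))
    (α r0 ε : ℝ) (hα : 0 < α) (hα1 : α ≤ 1) (hr0 : 1 < r0)
    (hε : 0 < ε) (hε1 : ε ≤ 1 - r0 ^ (-α))
    (x : EuclideanSpace ℝ (Fin d)) (hx : r0 ≤ ‖x‖)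
    (hfin : ν ((Metric.ball (0 : EuclideanSpace ℝ (Fin d)) 1)ᶜ) < ⊤)
    (hA : IntegrableOn (fun y => ‖y‖)
      {y : EuclideanSpace ℝ (Fin d) | 1 ≤ ‖y‖ ∧ r0 < ‖y + x‖ ∧ ‖y + x‖ < ‖x‖} ν) :
    -(α / (r0 * ‖x‖ ^ α)) *
        (∫ y in {y : EuclideanSpace ℝ (Fin d) | 1 ≤ ‖y‖ ∧ r0 < ‖y + x‖ ∧ ‖y + x‖ < ‖x‖},
            ‖y‖ ∂ν)
      + (-1 + ‖x‖ ^ (-α)) *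
          (ν {y : EuclideanSpace ℝ (Fin d) | 1 ≤ ‖y‖ ∧ ‖y + x‖ ≤ r0}).toReal
    ≤ ∫ y in (Metric.ball (0 : EuclideanSpace ℝ (Fin d)) 1)ᶜ,
        (Set.indicator {y : EuclideanSpace ℝ (Fin d) | r0 < ‖y + x‖}
            (fun y => 1 - ‖y + x‖ ^ (-α)) y
          + Set.indicator {y : EuclideanSpace ℝ (Fin d) | ‖y + x‖ ≤ r0}
              (fun _ => 1 - r0 ^ (-α) - ε) y
          - (1 - ‖x‖ ^ (-α))) ∂ν := by
  set A := {y : EuclideanSpace ℝ (Fin d) | 1 ≤ ‖y‖ ∧ r0 < ‖y + x‖ ∧ ‖y + x‖ < ‖x‖} with hAdef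
  set B := {y : EuclideanSpace ℝ (Fin d) | 1 ≤ ‖y‖ ∧ ‖y + x‖ ≤ r0} with hBdef
  set C := (Metric.ball (0 : EuclideanSpace ℝ (Fin d)) 1)ᶜ with hCdef
  have hCm : MeasurableSet C := Metric.isOpen_ball.measurableSet.compl
  have hS1 : MeasurableSet {y : EuclideanSpace ℝ (Fin d) | r0 < ‖y + x‖} :=
    measurableSet_lt (by fun_prop) (by fun_prop)
  have hS2 : MeasurableSet {y : EuclideanSpace ℝ (Fin d) | ‖y + x‖ ≤ r0} :=
    measurableSet_le (by fun_prop) (by fun_prop)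
  have hN : MeasurableSet {y : EuclideanSpace ℝ (Fin d) | 1 ≤ ‖y‖} :=
    measurableSet_le (by fun_prop) (by fun_prop)
  have hS3 : MeasurableSet {y : EuclideanSpace ℝ (Fin d) | ‖y + x‖ < ‖x‖} :=
    measurableSet_lt (by fun_prop) (by fun_prop)
  have hAm : MeasurableSet A := hN.inter (hS1.inter hS3)
  have hBm : MeasurableSet B := hN.inter hS2
  have hAC : A ⊆ C := by
    intro y hy
    simpa [hCdef] using hy.1
  have hBC : B ⊆ C := by
    intro y hy
    simpa [hCdef] using hy.1
  have : IsFiniteMeasure (ν.restrict C) := ⟨by simpa using hfin⟩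
  have hR0 : 0 < ‖x‖ := by linarith
  have hRle : ‖x‖ ^ (-α) ≤ 1 := Real.rpow_le_one_of_one_le_of_nonpos (by linarith) (by linarith)
  have hRnn : 0 ≤ ‖x‖ ^ (-α) := by positivity
  have hr0nn : 0 ≤ r0 ^ (-α) := by positivity
  set c := α / (r0 * ‖x‖ ^ α) with hc
  have i1 : Integrable (A.indicator (fun y => -c * ‖y‖)) (ν.restrict C) := by
    refine Integrable.mono_measure ?_ Measure.restrict_le_self
    rw [integrable_indicator_iff hAm]
    exact hA.const_mul _
  have i2 : Integrable (B.indicator (fun _ => -1 + ‖x‖ ^ (-α))) (ν.restrict C) :=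
    (integrable_const _).indicator hBm
  have e : -c * (∫ y in A, ‖y‖ ∂ν) + (-1 + ‖x‖ ^ (-α)) * (ν B).toReal
      = ∫ y in C, (A.indicator (fun y => -c * ‖y‖) y
          + B.indicator (fun _ => -1 + ‖x‖ ^ (-α)) y) ∂ν := by
    rw [integral_add i1 i2, integral_indicator hAm, integral_indicator hBm,
      Measure.restrict_restrict hAm, Measure.restrict_restrict hBm,
      Set.inter_eq_left.2 hAC, Set.inter_eq_left.2 hBC, integral_const_mul, setIntegral_const,
      smul_eq_mul, Measure.real, mul_comm (-1 + ‖x‖ ^ (-α))]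
  rw [e]
  refine setIntegral_mono_on (i1.add i2) ?_ hCm ?_
  · refine Integrable.sub (Integrable.add ?_ ((integrable_const _).indicator hS2))
      (integrable_const _)
    refine Integrable.of_bound (C := 1) ?_ (Filter.Eventually.of_forall fun y => ?_)
    · exact (Measurable.indicator (by fun_prop) hS1).aestronglyMeasurable
    · by_cases h : r0 < ‖y + x‖
      · rw [Set.indicator_of_mem (by exact h)]
        have h1 : ‖y + x‖ ^ (-α) ≤ 1 :=
          Real.rpow_le_one_of_one_le_of_nonpos (by linarith) (by linarith)
        have h2 : 0 ≤ ‖y + x‖ ^ (-α) := by positivity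
        rw [Real.norm_eq_abs, abs_le]
        constructor <;> linarith
      · rw [Set.indicator_of_notMem (by exact h)]
        simp
  · intro y hy
    have hy1 : 1 ≤ ‖y‖ := by simpa [hCdef] using hy
    by_cases h : r0 < ‖y + x‖
    · have hB : y ∉ B := fun hb => absurd hb.2 (not_le.2 h)
      rw [Set.indicator_of_notMem hB, Set.indicator_of_mem (s := {y | r0 < ‖y + x‖}) (by exact h),
        Set.indicator_of_notMem (s := {y | ‖y + x‖ ≤ r0}) (by exact not_le.2 h)]
      by_cases h' : ‖y + x‖ < ‖x‖
      · rw [Set.indicator_of_mem (show y ∈ A from ⟨hy1, h, h'⟩)]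
        have ht : ‖x‖ - ‖y + x‖ ≤ ‖y‖ := by
          have := norm_sub_norm_le x (y + x)
          simpa using this
        have := aux_bern hα hα1 hr0 h h' ht
        rw [← hc] at this
        linarith
      · rw [Set.indicator_of_notMem (show y ∉ A from fun ha => h' ha.2.2)]
        have := Real.rpow_le_rpow_of_nonpos hR0 (not_lt.1 h') (show -α ≤ 0 by linarith)
        linarith
    · have hA' : y ∉ A := fun ha => h ha.2.1
      rw [Set.indicator_of_notMem hA', Set.indicator_of_mem (show y ∈ B from ⟨hy1, not_lt.1 h⟩),
        Set.indicator_of_notMem (s := {y | r0 < ‖y + x‖}) (by exact h),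
        Set.indicator_of_mem (s := {y | ‖y + x‖ ≤ r0}) (by exact not_lt.1 h)]
      linarith
end

section
/- Let d ≥ 1, r_0 > 1 and x ∈ ℝ^d with |x| ≥ r_0 + 1. Let a(x) ≥ 0 be a real number, b(x) ∈ ℝ^d, c(x) a symmetric real d×d matrix, and ν_x a Borel measure on ℝ^d with ν_x({0}) = 0, ν_x(B^c(0,1)) < ∞, ∫_{B(0,1)} |y|² ν_x(dy) < ∞, and such that y ↦ ln(max(|y+x|, r_0)) is ν_x-integrable on B^c(0,1). Let v̄ : ℝ^d → ℝ be twice continuously differentiable, of the form v̄(z) = g(|z|) for some nondecreasing g : [0,∞) → ℝ, and satisfying v̄(z) = ln|z| whenever |z| ≥ r_0. Then the function y ↦ v̄(x+y) − v̄(x) − ⟨y, ∇v̄(x)⟩ 1_{B(0,1)}(y) is ν_x-integrable and ℒv̄(x) ≤ −a(x) ln|x| + A(x) − C(x) + B(x) + (1/2)(|x|−1)^{−2} ∫_{B(0,1)} |y|² ν_x(dy) + ∫_{B^c(0,1)} (ln(max(|y+x|, r_0)) − ln|x|) ν_x(dy). -/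
open MeasureTheory Real
open scoped RealInnerProductSpace

/-- The integro-differential operator ℒ of the paper (evaluated at a single point `x`,
with frozen coefficients `a`, `b`, `c` and Lévy measure `ν` at that point), applied to a
twice continuously differentiable function `f`. -/
noncomputable def genL (d : ℕ) (a : ℝ) (b : EuclideanSpace ℝ (Fin d))
    (c : Matrix (Fin d) (Fin d) ℝ) (ν : Measure (EuclideanSpace ℝ (Fin d)))
    (f : EuclideanSpace ℝ (Fin d) → ℝ) (x : EuclideanSpace ℝ (Fin d)) : ℝ :=
  -a * f x + ⟪b, gradient f x⟫
    + (1 / 2) * ∑ i, ∑ j, c i j *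
        iteratedFDeriv ℝ 2 f x ![EuclideanSpace.single i 1, EuclideanSpace.single j 1]
    + ∫ y, (f (x + y) - f x
        - Set.indicator (Metric.ball (0 : EuclideanSpace ℝ (Fin d)) 1)
            (fun y => ⟪y, gradient f x⟫) y) ∂ν

section helpers

variable {E : Type*} [NormedAddCommGroup E] [InnerProductSpace ℝ E]

lemma aux_fderiv_log (z : E) (hz : z ≠ 0) :
    HasFDerivAt (fun z : E => Real.log ‖z‖) ((‖z‖ ^ 2)⁻¹ • innerSL ℝ z) z := by
  have h1 : HasFDerivAt (fun z : E => ‖z‖ ^ 2) (2 • innerSL ℝ z) z :=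
    (hasStrictFDerivAt_norm_sq z).hasFDerivAt
  have hpos : 0 < ‖z‖ := norm_pos_iff.mpr hz
  have h2 := (h1.log (by positivity)).const_mul (1 / 2 : ℝ)
  have h3 : (fun z : E => Real.log ‖z‖) = fun z : E => (1 / 2 : ℝ) * Real.log (‖z‖ ^ 2) := by
    funext w
    rw [Real.log_pow]; push_cast; ring
  rw [h3]
  refine h2.congr_fderiv ?_
  ext h
  simp
  ring

lemma aux_snd (x : E) (hx : x ≠ 0) (h k : E) :
    fderiv ℝ (fun z : E => (‖z‖ ^ 2)⁻¹ • innerSL ℝ z) x h k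
      = (‖x‖ ^ 2)⁻¹ * ⟪h, k⟫ - 2 * ((‖x‖ ^ 2)⁻¹) ^ 2 * ⟪x, h⟫ * ⟪x, k⟫ := by
  have h1 : HasFDerivAt (fun z : E => ‖z‖ ^ 2) (2 • innerSL ℝ x) x :=
    (hasStrictFDerivAt_norm_sq x).hasFDerivAt
  have hpos : 0 < ‖x‖ := norm_pos_iff.mpr hx
  have h2 : HasFDerivAt (fun z : E => (‖z‖ ^ 2)⁻¹)
      ((-((‖x‖ ^ 2) ^ 2)⁻¹) • (2 • innerSL ℝ x)) x :=
    (hasDerivAt_inv (by positivity : ‖x‖ ^ 2 ≠ 0)).comp_hasFDerivAt x h1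
  have h3 : HasFDerivAt (fun z : E => (innerSL ℝ z : E →L[ℝ] ℝ)) (innerSL ℝ : E →L[ℝ] E →L[ℝ] ℝ) x :=
    (innerSL ℝ : E →L[ℝ] E →L[ℝ] ℝ).hasFDerivAt
  have h4 := h2.smul h3
  have h5 := h4.fderiv
  have h6 : (fun z : E => (‖z‖ ^ 2)⁻¹ • innerSL ℝ z) = (fun z : E => (‖z‖ ^ 2)⁻¹) • (fun z : E => (innerSL ℝ z : E →L[ℝ] ℝ)) := rfl
  rw [h6, h5]
  simp
  ring_nf
  rfl

lemma aux_ub (x y : E) (hx : 0 < ‖x‖) (hxy : 0 < ‖x + y‖) :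
    Real.log ‖x + y‖ - Real.log ‖x‖ - (‖x‖ ^ 2)⁻¹ * ⟪x, y⟫ ≤ 1 / 2 * (‖x‖ ^ 2)⁻¹ * ‖y‖ ^ 2 := by
  have h1 : Real.log (‖x + y‖ ^ 2 / ‖x‖ ^ 2) ≤ ‖x + y‖ ^ 2 / ‖x‖ ^ 2 - 1 :=
    Real.log_le_sub_one_of_pos (by positivity)
  rw [Real.log_div (by positivity) (by positivity), Real.log_pow, Real.log_pow,
    norm_add_sq_real] at h1
  have h2 : (‖x‖ ^ 2 + 2 * ⟪x, y⟫ + ‖y‖ ^ 2) / ‖x‖ ^ 2 - 1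
      = 2 * ((‖x‖ ^ 2)⁻¹ * ⟪x, y⟫) + (‖x‖ ^ 2)⁻¹ * ‖y‖ ^ 2 := by
    field_simp; ring
  rw [h2] at h1
  push_cast at h1
  linarith

lemma aux_lb (x y : E) (hx : 1 ≤ ‖x‖) (hxy : 1 ≤ ‖x + y‖) (hy : ‖y‖ ≤ 1) :
    -(5 * ‖y‖ ^ 2) ≤ Real.log ‖x + y‖ - Real.log ‖x‖ - (‖x‖ ^ 2)⁻¹ * ⟪x, y⟫ := by
  have hx0 : 0 < ‖x‖ := by linarith
  have hxy0 : 0 < ‖x + y‖ := by linarith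
  have h1 : 1 - (‖x + y‖ ^ 2 / ‖x‖ ^ 2)⁻¹ ≤ Real.log (‖x + y‖ ^ 2 / ‖x‖ ^ 2) :=
    Real.one_sub_inv_le_log_of_pos (by positivity)
  rw [Real.log_div (by positivity) (by positivity), Real.log_pow, Real.log_pow] at h1
  push_cast at h1
  have hN := norm_add_sq_real x y
  set N := ‖x + y‖ ^ 2 with hNdef
  set R := ‖x‖ with hR
  set p : ℝ := ⟪x, y⟫ with hp
  set m := ‖y‖ with hm
  have hm0 : 0 ≤ m := norm_nonneg y
  have hN1 : 1 ≤ N := by rw [hNdef]; nlinarith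
  have hpabs : |p| ≤ R * m := abs_real_inner_le_norm x y
  -- s := N - R^2
  have hs : |N - R ^ 2| ≤ 3 * (R * m) := by
    rw [hN]
    have := abs_le.mp hpabs
    have : m ^ 2 ≤ R * m := by nlinarith
    rw [abs_le]; constructor <;> nlinarith [sq_nonneg m]
  have hs2 : (N - R ^ 2) ^ 2 ≤ 9 * (R ^ 2 * m ^ 2) := by
    have := sq_le_sq' (by linarith [(abs_le.mp hs).1]) (abs_le.mp hs).2
    nlinarith
  have h3 : 1 - (N / R ^ 2)⁻¹ = (N - R ^ 2) / R ^ 2 - (N - R ^ 2) ^ 2 / (R ^ 2 * N) := by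
    field_simp; ring
  have h4 : (N - R ^ 2) ^ 2 / (R ^ 2 * N) ≤ 9 * m ^ 2 := by
    rw [div_le_iff₀ (by positivity)]
    have : 0 ≤ R ^ 2 * m ^ 2 := by positivity
    nlinarith
  have h5 : (N - R ^ 2) / R ^ 2 = 2 * ((R ^ 2)⁻¹ * p) + m ^ 2 / R ^ 2 := by
    rw [hN]; field_simp; ring
  have h6 : 0 ≤ m ^ 2 / R ^ 2 := by positivity
  nlinarith

end helpers

theorem stmt_4 (d : ℕ) (hd : 1 ≤ d) (r0 : ℝ) (hr0 : 1 < r0)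
    (x : EuclideanSpace ℝ (Fin d)) (hx : r0 + 1 ≤ ‖x‖)
    (a : ℝ) (ha : 0 ≤ a) (b : EuclideanSpace ℝ (Fin d))
    (c : Matrix (Fin d) (Fin d) ℝ) (hc : c.IsSymm)
    (ν : Measure (EuclideanSpace ℝ (Fin d)))
    (hν0 : ν {0} = 0)
    (hνfin : ν ((Metric.ball (0 : EuclideanSpace ℝ (Fin d)) 1)ᶜ) < ⊤)
    (hνsq : IntegrableOn (fun y => ‖y‖ ^ 2)
      (Metric.ball (0 : EuclideanSpace ℝ (Fin d)) 1) ν)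
    (hνlog : IntegrableOn (fun y => Real.log (max ‖y + x‖ r0))
      ((Metric.ball (0 : EuclideanSpace ℝ (Fin d)) 1)ᶜ) ν)
    (v : EuclideanSpace ℝ (Fin d) → ℝ) (hv : ContDiff ℝ 2 v)
    (g : ℝ → ℝ) (hg : MonotoneOn g (Set.Ici 0)) (hvg : ∀ z, v z = g ‖z‖)
    (hvlog : ∀ z : EuclideanSpace ℝ (Fin d), r0 ≤ ‖z‖ → v z = Real.log ‖z‖) :
    Integrable (fun y => v (x + y) - v x
      - Set.indicator (Metric.ball (0 : EuclideanSpace ℝ (Fin d)) 1)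
          (fun y => ⟪y, gradient v x⟫) y) ν ∧
    genL d a b c ν v x ≤
      -a * Real.log ‖x‖
        + ((1 / 2) * ‖x‖ ^ (-2 : ℝ) * c.trace
            - ‖x‖ ^ (-4 : ℝ) * ∑ i, ∑ j, c i j * x i * x j
            + ‖x‖ ^ (-2 : ℝ) * ⟪x, b⟫)
        + (1 / 2) * (‖x‖ - 1) ^ (-2 : ℝ) *
            ∫ y in Metric.ball (0 : EuclideanSpace ℝ (Fin d)) 1, ‖y‖ ^ 2 ∂ν
        + ∫ y in (Metric.ball (0 : EuclideanSpace ℝ (Fin d)) 1)ᶜ,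
            (Real.log (max ‖y + x‖ r0) - Real.log ‖x‖) ∂ν := by
  have hR : 0 < ‖x‖ := by linarith
  have hx0 : x ≠ 0 := norm_pos_iff.mp hR
  have hvx : v x = Real.log ‖x‖ := hvlog x (by linarith)
  have hev : ∀ᶠ z in nhds x, fderiv ℝ v z = (‖z‖ ^ 2)⁻¹ • innerSL ℝ z := by
    have hopen : IsOpen {z : EuclideanSpace ℝ (Fin d) | r0 < ‖z‖} :=
      isOpen_lt continuous_const continuous_norm
    have hmem : x ∈ {z : EuclideanSpace ℝ (Fin d) | r0 < ‖z‖} := by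
      show r0 < ‖x‖
      linarith
    filter_upwards [hopen.mem_nhds hmem] with z hz
    have hz' : r0 < ‖z‖ := hz
    have hz0 : z ≠ 0 := norm_pos_iff.mp (by linarith)
    have heq : v =ᶠ[nhds z] fun z => Real.log ‖z‖ := by
      filter_upwards [hopen.mem_nhds hz] with w hw
      exact hvlog w (le_of_lt hw)
    exact ((aux_fderiv_log z hz0).congr_of_eventuallyEq heq).fderiv
  have hgrad : ∀ y, ⟪y, gradient v x⟫ = (‖x‖ ^ 2)⁻¹ * ⟪x, y⟫ := by
    intro y
    rw [real_inner_comm]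
    unfold gradient
    rw [InnerProductSpace.toDual_symm_apply, hev.self_of_nhds]
    simp
  have hhess : ∀ h k : EuclideanSpace ℝ (Fin d), iteratedFDeriv ℝ 2 v x ![h, k]
      = (‖x‖ ^ 2)⁻¹ * ⟪h, k⟫ - 2 * ((‖x‖ ^ 2)⁻¹) ^ 2 * ⟪x, h⟫ * ⟪x, k⟫ := by
    intro h k
    rw [iteratedFDeriv_two_apply]
    have : fderiv ℝ (fderiv ℝ v) x
        = fderiv ℝ (fun z : EuclideanSpace ℝ (Fin d) => (‖z‖ ^ 2)⁻¹ • innerSL ℝ z) x :=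
      Filter.EventuallyEq.fderiv_eq hev
    rw [this]
    simpa using aux_snd x hx0 h k
  -- bounds for small jumps
  have hsmall : ∀ y : EuclideanSpace ℝ (Fin d), ‖y‖ < 1 → r0 ≤ ‖x + y‖ := by
    intro y hy
    have := norm_sub_le (x + y) y
    simp only [add_sub_cancel_right] at this
    linarith
  set U := Metric.ball (0 : EuclideanSpace ℝ (Fin d)) 1 with hU
  have hUm : MeasurableSet U := measurableSet_ball
  set F : EuclideanSpace ℝ (Fin d) → ℝ := fun y => v (x + y) - v x
      - Set.indicator U (fun y => ⟪y, gradient v x⟫) y with hF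
  have hFU : ∀ y ∈ U, F y = Real.log ‖x + y‖ - Real.log ‖x‖ - (‖x‖ ^ 2)⁻¹ * ⟪x, y⟫ := by
    intro y hy
    have hy1 : ‖y‖ < 1 := by simpa [hU] using hy
    simp only [hF, Set.indicator_of_mem hy, hgrad, hvx, hvlog _ (hsmall y hy1)]
  have hFUc : ∀ y ∈ Uᶜ, F y = v (x + y) - Real.log ‖x‖ := by
    intro y hy
    simp only [hF, Set.indicator_of_notMem hy, hvx, sub_zero]
  have hFm : Measurable F := by
    have h1 : Measurable (fun y => v (x + y)) :=
      (hv.continuous.comp (continuous_const.add continuous_id)).measurable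
    have h2 : Measurable (fun y : EuclideanSpace ℝ (Fin d) => ⟪y, gradient v x⟫) :=
      (continuous_id.inner continuous_const).measurable
    exact (h1.sub_const _).sub (h2.indicator hUm)
  have hub : ∀ y ∈ U, F y ≤ 1 / 2 * (‖x‖ ^ 2)⁻¹ * ‖y‖ ^ 2 := by
    intro y hy
    have hy1 : ‖y‖ < 1 := by simpa [hU] using hy
    rw [hFU y hy]
    exact aux_ub x y hR (by linarith [hsmall y hy1])
  have hlb : ∀ y ∈ U, -(5 * ‖y‖ ^ 2) ≤ F y := by
    intro y hy
    have hy1 : ‖y‖ < 1 := by simpa [hU] using hy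
    rw [hFU y hy]
    exact aux_lb x y (by linarith) (by linarith [hsmall y hy1]) hy1.le
  have hvub : ∀ z, v z ≤ Real.log (max ‖z‖ r0) := by
    intro z
    rcases le_total r0 ‖z‖ with h | h
    · rw [max_eq_left h, hvlog z h]
    · rw [max_eq_right h]
      have hn : ‖(r0 / ‖x‖) • x‖ = r0 := by
        rw [norm_smul, Real.norm_of_nonneg (by positivity)]
        field_simp
      have h2 := hvlog ((r0 / ‖x‖) • x) hn.ge
      rw [hvg, hn] at h2
      rw [hvg, ← h2]
      exact hg (norm_nonneg z) (by simp; linarith) h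
  have hvlb : ∀ z, g 0 ≤ v z := by
    intro z
    rw [hvg]
    exact hg (by simp) (norm_nonneg z) (norm_nonneg z)
  have hI1 : IntegrableOn F U ν := by
    refine Integrable.mono' (hνsq.const_mul 5) hFm.aestronglyMeasurable ?_
    filter_upwards [ae_restrict_mem hUm] with y hy
    rw [Real.norm_eq_abs, abs_le]
    refine ⟨hlb y hy, (hub y hy).trans ?_⟩
    have : (‖x‖ ^ 2)⁻¹ ≤ 1 := inv_le_one_of_one_le₀ (by nlinarith)
    nlinarith [sq_nonneg ‖y‖]
  have hIlog : IntegrableOn (fun y => Real.log (max ‖y + x‖ r0) - Real.log ‖x‖) Uᶜ ν :=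
    hνlog.sub (integrableOn_const hνfin.ne)
  have hI2 : IntegrableOn F Uᶜ ν := by
    have hc1 : IntegrableOn (fun _ : EuclideanSpace ℝ (Fin d) => |g 0| + |Real.log ‖x‖|) Uᶜ ν :=
      integrableOn_const hνfin.ne
    refine Integrable.mono' (hνlog.add hc1) hFm.aestronglyMeasurable ?_
    filter_upwards [ae_restrict_mem hUm.compl] with y hy
    rw [hFUc y hy, Real.norm_eq_abs, abs_le]
    have h1 := hvub (x + y)
    have h2 := hvlb (x + y)
    have h3 : 0 ≤ Real.log (max ‖y + x‖ r0) :=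
      Real.log_nonneg (hr0.le.trans (le_max_right _ _))
    have h4 := abs_le.mp (le_refl |g 0|)
    have h5 := abs_le.mp (le_refl |Real.log ‖x‖|)
    rw [add_comm x y] at h1 h2 ⊢
    simp only [Pi.add_apply]
    constructor <;> linarith [abs_nonneg (g 0)]
  have hI : Integrable F ν := by
    rw [← integrableOn_univ, ← Set.union_compl_self U]
    exact hI1.union hI2
  refine ⟨hI, ?_⟩
  have hJ1 : ∫ y in U, F y ∂ν ≤ (1 / 2) * (‖x‖ - 1) ^ (-2 : ℝ) * ∫ y in U, ‖y‖ ^ 2 ∂ν := by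
    rw [← integral_const_mul]
    refine setIntegral_mono_on hI1 (hνsq.const_mul _) hUm ?_
    intro y hy
    refine (hub y hy).trans ?_
    have hpow : (‖x‖ - 1) ^ (-2 : ℝ) = ((‖x‖ - 1) ^ 2)⁻¹ := by
      rw [Real.rpow_neg (by linarith)]; norm_cast
    rw [hpow]
    have hxm : 0 < ‖x‖ - 1 := by linarith
    have : (‖x‖ ^ 2)⁻¹ ≤ ((‖x‖ - 1) ^ 2)⁻¹ :=
      inv_anti₀ (by positivity) (by nlinarith)
    have := mul_le_mul_of_nonneg_right this (sq_nonneg ‖y‖)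
    linarith
  have hJ2 : ∫ y in Uᶜ, F y ∂ν ≤ ∫ y in Uᶜ, (Real.log (max ‖y + x‖ r0) - Real.log ‖x‖) ∂ν := by
    refine setIntegral_mono_on hI2 hIlog hUm.compl ?_
    intro y hy
    rw [hFUc y hy]
    have h1 := hvub (x + y)
    rw [add_comm x y] at h1 ⊢
    linarith
  have hJ : ∫ y, F y ∂ν = ∫ y in U, F y ∂ν + ∫ y in Uᶜ, F y ∂ν :=
    (integral_add_compl hUm hI).symm
  have hp2 : ‖x‖ ^ (-2 : ℝ) = (‖x‖ ^ 2)⁻¹ := by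
    rw [Real.rpow_neg hR.le]; norm_cast
  have hp4 : ‖x‖ ^ (-4 : ℝ) = ((‖x‖ ^ 2)⁻¹) ^ 2 := by
    rw [Real.rpow_neg hR.le, inv_pow, ← pow_mul]; norm_cast
  have hsum : ∑ i, ∑ j, c i j *
        iteratedFDeriv ℝ 2 v x ![EuclideanSpace.single i 1, EuclideanSpace.single j 1]
      = (‖x‖ ^ 2)⁻¹ * c.trace - 2 * ((‖x‖ ^ 2)⁻¹) ^ 2 * ∑ i, ∑ j, c i j * x i * x j := by
    have htr : c.trace = ∑ i, ∑ j, c i j * (if i = j then 1 else 0) := by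
      simp [Matrix.trace]
    rw [htr]
    simp only [Finset.mul_sum, ← Finset.sum_sub_distrib]
    refine Finset.sum_congr rfl fun i _ => Finset.sum_congr rfl fun j _ => ?_
    rw [hhess]
    have e1 : ⟪(EuclideanSpace.single i (1:ℝ) : EuclideanSpace ℝ (Fin d)), EuclideanSpace.single j 1⟫
        = if i = j then (1:ℝ) else 0 := by
      simp [EuclideanSpace.inner_single_left, Pi.single_apply]
    have e2 : ∀ i, ⟪x, (EuclideanSpace.single i (1:ℝ) : EuclideanSpace ℝ (Fin d))⟫ = x i := by
      intro i
      simp [EuclideanSpace.inner_single_right]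
    rw [e1, e2, e2]
    ring
  unfold genL
  rw [hsum, hgrad b, hp2, hp4]
  change _ + ∫ y, F y ∂ν ≤ _
  rw [hJ, hvx]
  linarith
end

section
/- Let d ≥ 1, 0 < α ≤ 2, r_0 > 1 and x ∈ ℝ^d with |x| ≥ r_0 + 1. Let a(x) ≥ 0 be a real number, b(x) ∈ ℝ^d, c(x) a symmetric real d×d matrix, and ν_x a Borel measure on ℝ^d with ν_x({0}) = 0, ν_x(B^c(0,1)) < ∞, ∫_{B(0,1)} |y|² ν_x(dy) < ∞, and such that y ↦ (max(|y+x|, r_0))^α is ν_x-integrable on B^c(0,1). Let v̄ : ℝ^d → ℝ be twice continuously differentiable, of the form v̄(z) = g(|z|) for some nondecreasing g : [0,∞) → ℝ, and satisfying v̄(z) = |z|^α whenever |z| ≥ r_0. Then the function y ↦ v̄(x+y) − v̄(x) − ⟨y, ∇v̄(x)⟩ 1_{B(0,1)}(y) is ν_x-integrable and ℒv̄(x) ≤ −a(x)|x|^α + α|x|^α (A(x) − (1 − α/2) C(x) + B(x)) + (α/2)(|x|−1)^{α−2} ∫_{B(0,1)} |y|² ν_x(dy) + ∫_{B^c(0,1)}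 ((max(|y+x|, r_0))^α − |x|^α) ν_x(dy). -/
open MeasureTheory Real
open scoped RealInnerProductSpace

lemma aux_deriv {d : ℕ} (p : ℝ) (z : EuclideanSpace ℝ (Fin d)) (hz : 0 < ‖z‖) :
    HasFDerivAt (fun z : EuclideanSpace ℝ (Fin d) => (‖z‖ ^ 2) ^ p)
      ((2 * p * (‖z‖ ^ 2) ^ (p - 1)) • (innerSL ℝ z)) z := by
  have h1 : HasFDerivAt (fun z : EuclideanSpace ℝ (Fin d) => ‖z‖ ^ 2) (2 • innerSL ℝ z) z :=
    (hasStrictFDerivAt_norm_sq z).hasFDerivAt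
  have h2 := h1.rpow_const (p := p) (Or.inl (by positivity))
  have e : (2 * p * (‖z‖ ^ 2) ^ (p - 1)) • (innerSL ℝ z)
      = (p * (‖z‖ ^ 2) ^ (p - 1)) • (2 • innerSL ℝ z) := by
    ext w
    simp
    ring
  rw [e]
  exact h2

lemma norm_pow_eq {d : ℕ} (p : ℝ) (z : EuclideanSpace ℝ (Fin d)) :
    (‖z‖ ^ 2) ^ p = ‖z‖ ^ (2 * p) := by
  rw [← Real.rpow_natCast, ← Real.rpow_mul (norm_nonneg z)]; norm_num

lemma v_fderiv {d : ℕ} (α r0 : ℝ) (hr0 : 1 < r0)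
    (v : EuclideanSpace ℝ (Fin d) → ℝ)
    (hvpow : ∀ z : EuclideanSpace ℝ (Fin d), r0 ≤ ‖z‖ → v z = ‖z‖ ^ α)
    (z : EuclideanSpace ℝ (Fin d)) (hz : r0 < ‖z‖) :
    HasFDerivAt v ((α * (‖z‖ ^ 2) ^ (α / 2 - 1)) • (innerSL ℝ z)) z := by
  have h := aux_deriv (α / 2) z (by linarith)
  rw [show 2 * (α / 2) = α by ring] at h
  refine h.congr_of_eventuallyEq ?_
  have : ∀ᶠ w in nhds z, r0 < ‖w‖ := continuous_norm.continuousAt.eventually (lt_mem_nhds hz)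
  filter_upwards [this] with w hw
  rw [hvpow w hw.le, norm_pow_eq]; congr 1; ring

lemma v_hess {d : ℕ} (α r0 : ℝ) (hr0 : 1 < r0)
    (v : EuclideanSpace ℝ (Fin d) → ℝ)
    (hvpow : ∀ z : EuclideanSpace ℝ (Fin d), r0 ≤ ‖z‖ → v z = ‖z‖ ^ α)
    (z : EuclideanSpace ℝ (Fin d)) (hz : r0 < ‖z‖) (u w : EuclideanSpace ℝ (Fin d)) :
    iteratedFDeriv ℝ 2 v z ![u, w] = α * (‖z‖ ^ 2) ^ (α / 2 - 1) * ⟪u, w⟫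
      + α * (α - 2) * (‖z‖ ^ 2) ^ (α / 2 - 2) * (⟪z, u⟫ * ⟪z, w⟫) := by
  rw [iteratedFDeriv_two_apply]
  have h1 := (aux_deriv (α / 2 - 1) z (by linarith)).const_mul α
  have h2 : HasFDerivAt (fun z : EuclideanSpace ℝ (Fin d) => innerSL ℝ z) (innerSL ℝ) z :=
    (innerSL ℝ (E := EuclideanSpace ℝ (Fin d))).hasFDerivAt
  have h3 := h1.smul h2
  have h4 : fderiv ℝ v =ᶠ[nhds z] fun z => (α * (‖z‖ ^ 2) ^ (α / 2 - 1)) • (innerSL ℝ z) := by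
    have : ∀ᶠ w in nhds z, r0 < ‖w‖ := continuous_norm.continuousAt.eventually (lt_mem_nhds hz)
    filter_upwards [this] with w hw
    exact (v_fderiv α r0 hr0 v hvpow w hw).fderiv
  have h5 := (h3.congr_of_eventuallyEq h4).fderiv
  rw [h5]
  have hi : ((innerSL ℝ) u) w = ⟪u, w⟫ := rfl
  simp [show α / 2 - 1 - 1 = α / 2 - 2 by ring, -innerSL_apply_apply, hi]
  try rw [hi]
  try simp only [innerSL_apply_apply]
  ring

lemma v_grad {d : ℕ} (α r0 : ℝ) (hr0 : 1 < r0)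
    (v : EuclideanSpace ℝ (Fin d) → ℝ)
    (hvpow : ∀ z : EuclideanSpace ℝ (Fin d), r0 ≤ ‖z‖ → v z = ‖z‖ ^ α)
    (z : EuclideanSpace ℝ (Fin d)) (hz : r0 < ‖z‖) :
    gradient v z = (α * (‖z‖ ^ 2) ^ (α / 2 - 1)) • z := by
  apply HasGradientAt.gradient
  rw [hasGradientAt_iff_hasFDerivAt]
  have h := v_fderiv α r0 hr0 v hvpow z hz
  have e : (InnerProductSpace.toDual ℝ (EuclideanSpace ℝ (Fin d)))
      ((α * (‖z‖ ^ 2) ^ (α / 2 - 1)) • z) = (α * (‖z‖ ^ 2) ^ (α / 2 - 1)) • innerSL ℝ z := by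
    ext w
    simp
  rw [e]
  exact h

/-- tangent line bound -/
lemma tangent (p s t : ℝ) (hp : 0 ≤ p) (hp1 : p ≤ 1) (hs : 0 < s) (ht : 0 < t) :
    t ^ p ≤ s ^ p + p * s ^ (p - 1) * (t - s) := by
  have h := rpow_one_add_le_one_add_mul_self (s := t / s - 1) (p := p)
    (by have : 0 < t / s := by positivity
        linarith) hp hp1
  rw [add_sub_cancel, Real.div_rpow ht.le hs.le, div_le_iff₀ (by positivity)] at h
  have e : s ^ (p - 1) = s ^ p / s := by rw [Real.rpow_sub hs, Real.rpow_one]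
  rw [e]
  refine h.trans (le_of_eq ?_)
  field_simp

lemma lip (q s t : ℝ) (hq : 0 ≤ q) (hq1 : q ≤ 1) (hs : 1 ≤ s) (hst : s ≤ t) :
    t ^ q - s ^ q ≤ t - s := by
  have h := tangent q s t hq hq1 (by linarith) (by linarith)
  have h1 : s ^ (q - 1) ≤ 1 := Real.rpow_le_one_of_one_le_of_nonpos hs (by linarith)
  have h2 : 0 ≤ s ^ (q - 1) := by positivity
  have : q * s ^ (q - 1) ≤ 1 := mul_le_one₀ hq1 h2 h1
  nlinarith

lemma neglip (q s t : ℝ) (hq : 0 ≤ q) (hq1 : q ≤ 1) (hs : 1 ≤ s) (hst : s ≤ t) :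
    s ^ (-q) - t ^ (-q) ≤ t - s ∧ t ^ (-q) ≤ s ^ (-q) := by
  have h := lip q s t hq hq1 hs hst
  have a1 : 1 ≤ s ^ q := Real.one_le_rpow hs hq
  have a2 : s ^ q ≤ t ^ q := Real.rpow_le_rpow (by linarith) hst hq
  rw [Real.rpow_neg (by linarith), Real.rpow_neg (by linarith)]
  have a3 : 0 < s ^ q := by linarith
  have a4 : 0 < t ^ q := by linarith
  refine ⟨le_trans ?_ h, by gcongr⟩
  rw [inv_sub_inv (by positivity) (by positivity)]
  apply div_le_self (by linarith)
  nlinarith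

lemma lower (p s t : ℝ) (hp : 0 ≤ p) (hp1 : p ≤ 1) (hs : 1 ≤ s) (ht : 1 ≤ t) :
    -(t - s) ^ 2 ≤ t ^ p - s ^ p - p * s ^ (p - 1) * (t - s) := by
  have h := tangent p t s hp hp1 (by linarith) (by linarith)
  suffices -(t - s) ^ 2 ≤ p * ((t ^ (p - 1) - s ^ (p - 1)) * (t - s)) by nlinarith
  have e : p - 1 = - (1 - p) := by ring
  rw [e]
  have key : -(t - s) ^ 2 ≤ (t ^ (-(1 - p)) - s ^ (-(1 - p))) * (t - s) ∧
      (t ^ (-(1 - p)) - s ^ (-(1 - p))) * (t - s) ≤ 0 := by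
    rcases le_total s t with hst | hst
    · obtain ⟨h1, h2⟩ := neglip (1 - p) s t (by linarith) (by linarith) hs hst
      constructor <;> nlinarith
    · obtain ⟨h1, h2⟩ := neglip (1 - p) t s (by linarith) (by linarith) ht hst
      constructor <;> nlinarith
  nlinarith [key.1, key.2]

theorem stmt_5 (d : ℕ) (hd : 1 ≤ d) (α r0 : ℝ) (hα : 0 < α) (hα2 : α ≤ 2)
    (hr0 : 1 < r0)
    (x : EuclideanSpace ℝ (Fin d)) (hx : r0 + 1 ≤ ‖x‖)
    (a : ℝ) (ha : 0 ≤ a) (b : EuclideanSpace ℝ (Fin d))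
    (c : Matrix (Fin d) (Fin d) ℝ) (hc : c.IsSymm)
    (ν : Measure (EuclideanSpace ℝ (Fin d)))
    (hν0 : ν {0} = 0)
    (hνfin : ν ((Metric.ball (0 : EuclideanSpace ℝ (Fin d)) 1)ᶜ) < ⊤)
    (hνsq : IntegrableOn (fun y => ‖y‖ ^ 2)
      (Metric.ball (0 : EuclideanSpace ℝ (Fin d)) 1) ν)
    (hνbig : IntegrableOn (fun y => (max ‖y + x‖ r0) ^ α)
      ((Metric.ball (0 : EuclideanSpace ℝ (Fin d)) 1)ᶜ) ν)
    (v : EuclideanSpace ℝ (Fin d) → ℝ) (hv : ContDiff ℝ 2 v)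
    (g : ℝ → ℝ) (hg : MonotoneOn g (Set.Ici 0)) (hvg : ∀ z, v z = g ‖z‖)
    (hvpow : ∀ z : EuclideanSpace ℝ (Fin d), r0 ≤ ‖z‖ → v z = ‖z‖ ^ α) :
    Integrable (fun y => v (x + y) - v x
      - Set.indicator (Metric.ball (0 : EuclideanSpace ℝ (Fin d)) 1)
          (fun y => ⟪y, gradient v x⟫) y) ν ∧
    genL d a b c ν v x ≤
      -a * ‖x‖ ^ α
        + α * ‖x‖ ^ α *
            ((1 / 2) * ‖x‖ ^ (-2 : ℝ) * c.trace
              - (1 - α / 2) * (‖x‖ ^ (-4 : ℝ) * ∑ i, ∑ j, c i j * x i * x j)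
              + ‖x‖ ^ (-2 : ℝ) * ⟪x, b⟫)
        + (α / 2) * (‖x‖ - 1) ^ (α - 2) *
            ∫ y in Metric.ball (0 : EuclideanSpace ℝ (Fin d)) 1, ‖y‖ ^ 2 ∂ν
        + ∫ y in (Metric.ball (0 : EuclideanSpace ℝ (Fin d)) 1)ᶜ,
            ((max ‖y + x‖ r0) ^ α - ‖x‖ ^ α) ∂ν := by
  have hxr : r0 < ‖x‖ := by linarith
  have hx0 : 0 < ‖x‖ := by linarith
  set Bl := Metric.ball (0 : EuclideanSpace ℝ (Fin d)) 1 with hBl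
  have hBm : MeasurableSet Bl := measurableSet_ball
  have hgrad := v_grad α r0 hr0 v hvpow x hxr
  set F : EuclideanSpace ℝ (Fin d) → ℝ := fun y => v (x + y) - v x
      - Set.indicator Bl (fun y => ⟪y, gradient v x⟫) y with hF
  have hvx : v x = ‖x‖ ^ α := hvpow x hxr.le
  have hvc : Continuous v := hv.continuous
  have hFm : Measurable F := by
    refine Measurable.sub (by fun_prop) (Measurable.indicator (by fun_prop) hBm)
  -- small jumps
  have hsm : ∀ y ∈ Bl, F y ≤ (α / 2) * (‖x‖ - 1) ^ (α - 2) * ‖y‖ ^ 2 ∧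
      -((2 * ‖x‖ + 1) ^ 2 * ‖y‖ ^ 2) ≤ F y := by
    intro y hy
    have hy1 : ‖y‖ < 1 := by simpa [hBl] using hy
    have hxy : ‖x‖ - ‖y‖ ≤ ‖x + y‖ := by
      have := norm_sub_le (x + y) y
      simp at this; linarith
    have hn : ‖x + y‖ ^ 2 = ‖x‖ ^ 2 + 2 * ⟪x, y⟫ + ‖y‖ ^ 2 := norm_add_sq_real x y
    have hFy : F y = (‖x + y‖ ^ 2) ^ (α / 2) - (‖x‖ ^ 2) ^ (α / 2)
        - α * (‖x‖ ^ 2) ^ (α / 2 - 1) * ⟪x, y⟫ := by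
      simp only [hF, Set.indicator_of_mem hy, hgrad, hvx, inner_smul_right]
      rw [hvpow (x + y) (by linarith), norm_pow_eq (α / 2), norm_pow_eq (α / 2), real_inner_comm,
        show 2 * (α / 2) = α by ring]
    have hP : (0:ℝ) ≤ (‖x‖ ^ 2) ^ (α / 2 - 1) := by positivity
    have ht : 1 ≤ ‖x + y‖ := by linarith
    constructor
    · have h := tangent (α / 2) (‖x‖ ^ 2) (‖x + y‖ ^ 2) (by linarith) (by linarith)
        (by positivity) (by positivity)
      have h2 : (‖x‖ ^ 2) ^ (α / 2 - 1) ≤ (‖x‖ - 1) ^ (α - 2) := by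
        rw [norm_pow_eq, show 2 * (α / 2 - 1) = α - 2 by ring]
        exact Real.rpow_le_rpow_of_nonpos (by linarith) (by linarith) (by linarith)
      have h3 : (α / 2) * (‖x‖ ^ 2) ^ (α / 2 - 1) * ‖y‖ ^ 2
          ≤ (α / 2) * (‖x‖ - 1) ^ (α - 2) * ‖y‖ ^ 2 := by gcongr
      rw [hFy]
      rw [hn] at h ⊢
      nlinarith
    · have h := lower (α / 2) (‖x‖ ^ 2) (‖x + y‖ ^ 2) (by linarith) (by linarith)
        (by nlinarith) (by nlinarith)
      have hin := abs_real_inner_le_norm x y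
      have hd2 : (‖x + y‖ ^ 2 - ‖x‖ ^ 2) ^ 2 ≤ ((2 * ‖x‖ + 1) * ‖y‖) ^ 2 := by
        rw [hn]
        apply sq_le_sq'
        · nlinarith [abs_le.1 hin, norm_nonneg y]
        · nlinarith [abs_le.1 hin, norm_nonneg y]
      have h4 : 0 ≤ (α / 2) * (‖x‖ ^ 2) ^ (α / 2 - 1) * ‖y‖ ^ 2 := by positivity
      rw [hFy]
      rw [hn] at h hd2 ⊢
      nlinarith
  -- large jumps
  have hmax : ∀ z, v z ≤ (max ‖z‖ r0) ^ α := by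
    intro z
    rcases le_total r0 ‖z‖ with h | h
    · rw [hvpow z h, max_eq_left h]
    · rw [max_eq_right h]
      have hw : ‖(r0 / ‖x‖) • x‖ = r0 := by
        rw [norm_smul, Real.norm_of_nonneg (by positivity)]; field_simp
      have h1 := hvpow ((r0 / ‖x‖) • x) hw.ge
      rw [hvg, hw] at h1
      rw [hvg, ← h1]
      exact hg (norm_nonneg z) (by simp; linarith) h
  have hmin : ∀ z, v 0 ≤ v z := by
    intro z
    rw [hvg, hvg z]
    exact hg (by simp) (norm_nonneg z) (by simp)
  have hFl : ∀ y ∈ Blᶜ, F y = v (x + y) - ‖x‖ ^ α := by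
    intro y hy
    simp only [hF, Set.indicator_of_notMem hy, hvx, sub_zero]
  have hconst : ∀ C : ℝ, IntegrableOn (fun _ => C) Blᶜ ν := fun C =>
    integrableOn_const hνfin.ne
  have hup : IntegrableOn (fun y => (max ‖y + x‖ r0) ^ α - ‖x‖ ^ α) Blᶜ ν :=
    hνbig.sub (hconst _)
  have hle : ∀ y ∈ Blᶜ, F y ≤ (max ‖y + x‖ r0) ^ α - ‖x‖ ^ α := by
    intro y hy
    rw [hFl y hy, add_comm y x]
    linarith [hmax (x + y)]
  have hI1 : IntegrableOn F Bl ν := by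
    refine integrable_of_le_of_le hFm.aestronglyMeasurable
      (g₁ := fun y => -((2 * ‖x‖ + 1) ^ 2 * ‖y‖ ^ 2))
      (g₂ := fun y => (α / 2) * (‖x‖ - 1) ^ (α - 2) * ‖y‖ ^ 2) ?_ ?_ ?_ ?_
    · exact (ae_restrict_iff' hBm).2 (.of_forall fun y hy => (hsm y hy).2)
    · exact (ae_restrict_iff' hBm).2 (.of_forall fun y hy => (hsm y hy).1)
    · exact (hνsq.const_mul _).neg
    · exact hνsq.const_mul _
  have hI2 : IntegrableOn F Blᶜ ν := by
    refine integrable_of_le_of_le hFm.aestronglyMeasurable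
      (g₁ := fun y => v 0 - ‖x‖ ^ α)
      (g₂ := fun y => (max ‖y + x‖ r0) ^ α - ‖x‖ ^ α) ?_ ?_ ?_ ?_
    · refine (ae_restrict_iff' hBm.compl).2 (.of_forall fun y hy => ?_)
      rw [hFl y hy]; linarith [hmin (x + y)]
    · exact (ae_restrict_iff' hBm.compl).2 (.of_forall fun y hy => hle y hy)
    · exact hconst _
    · exact hup
  have hI : Integrable F ν := by
    rw [← integrableOn_univ, ← Set.union_compl_self Bl]
    exact hI1.union hI2
  refine ⟨hI, ?_⟩
  have hint : ∫ y, F y ∂ν ≤ (α / 2) * (‖x‖ - 1) ^ (α - 2) * (∫ y in Bl, ‖y‖ ^ 2 ∂ν)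
      + ∫ y in Blᶜ, ((max ‖y + x‖ r0) ^ α - ‖x‖ ^ α) ∂ν := by
    rw [← integral_add_compl hBm hI, ← integral_const_mul]
    exact add_le_add
      (setIntegral_mono_on hI1 (hνsq.const_mul _) hBm fun y hy => (hsm y hy).1)
      (setIntegral_mono_on hI2 hup hBm.compl hle)
  have e1 : (‖x‖ ^ 2) ^ (α / 2 - 1) = ‖x‖ ^ α * ‖x‖ ^ (-2 : ℝ) := by
    rw [norm_pow_eq, ← Real.rpow_add hx0]; congr 1; ring
  have e2 : (‖x‖ ^ 2) ^ (α / 2 - 2) = ‖x‖ ^ α * ‖x‖ ^ (-4 : ℝ) := by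
    rw [norm_pow_eq, ← Real.rpow_add hx0]; congr 1; ring
  have hsum : ∑ i, ∑ j, c i j *
        iteratedFDeriv ℝ 2 v x ![EuclideanSpace.single i 1, EuclideanSpace.single j 1]
      = α * (‖x‖ ^ α * ‖x‖ ^ (-2 : ℝ)) * c.trace
        + α * (α - 2) * (‖x‖ ^ α * ‖x‖ ^ (-4 : ℝ)) * ∑ i, ∑ j, c i j * x i * x j := by
    have ht : c.trace = ∑ i, ∑ j, c i j * (if i = j then (1:ℝ) else 0) := by
      simp [Matrix.trace]
    rw [ht, Finset.mul_sum, Finset.mul_sum, ← Finset.sum_add_distrib]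
    refine Finset.sum_congr rfl fun i _ => ?_
    rw [Finset.mul_sum, Finset.mul_sum, ← Finset.sum_add_distrib]
    refine Finset.sum_congr rfl fun j _ => ?_
    rw [v_hess α r0 hr0 v hvpow x hxr, e1, e2]
    have k1 : ⟪(EuclideanSpace.single i (1:ℝ) : EuclideanSpace ℝ (Fin d)),
        EuclideanSpace.single j 1⟫ = if i = j then (1:ℝ) else 0 := by
      simp [EuclideanSpace.inner_single_left, Pi.single_apply]
    have k2 : ∀ i, ⟪x, (EuclideanSpace.single i (1:ℝ) : EuclideanSpace ℝ (Fin d))⟫ = x i := by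
      intro i; simp [EuclideanSpace.inner_single_right]
    rw [k1, k2, k2]
    ring
  unfold genL
  rw [hsum, hgrad, hvx, inner_smul_right, e1, real_inner_comm x b]
  have hint' := hint
  simp only [hF, hgrad, hvx, e1] at hint'
  linear_combination hint'
end

section
/- Let d ≥ 1, α > 0, r_0 > 1, 0 < ε ≤ 1 − r_0^{−α}, and let x ∈ ℝ^d with |x| ≥ r_0 + 1. Let a(x) ≥ 0 be a real number, b(x) ∈ ℝ^d, c(x) a symmetric real d×d matrix, and ν_x a Borel measure on ℝ^d with ν_x({0}) = 0, ν_x(B^c(0,1)) < ∞ and ∫_{B(0,1)} |y|² ν_x(dy) < ∞. Let w̄ : ℝ^d → ℝ be twice continuously differentiable, of the form w̄(z) = g(|z|) for some nondecreasing g : [0,∞) → ℝ, satisfying w̄(0) = 1 − r_0^{−α} − ε and w̄(z) = 1 − |z|^{−α} whenever |z| ≥ r_0. Then the function y ↦ w̄(x+y) − w̄(x) − ⟨y, ∇w̄(x)⟩ 1_{B(0,1)}(y) is ν_x-integrable and ℒw̄(x) ≥ −a(x)(1 − |x|^{−α}) + α|x|^{−α} (A(x) − (1 + α/2) C(x) +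 B(x)) + (α/2)((|x|+1)^{−2−α} − (2+α)(|x|+1)² (|x|−1)^{−4−α}) ∫_{B(0,1)} |y|² ν_x(dy) + ∫_{B^c(0,1)} ((1 − |y+x|^{−α}) 1_{{|y+x| > r_0}}(y) + (1 − r_0^{−α} − ε) 1_{{|y+x| ≤ r_0}}(y) − (1 − |x|^{−α})) ν_x(dy). -/
open MeasureTheory Real
open scoped RealInnerProductSpace

lemma taylor_lower (f f' f'' : ℝ → ℝ) (m : ℝ)
    (h1 : ∀ t ∈ Set.Icc (0:ℝ) 1, HasDerivAt f (f' t) t)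
    (h2 : ∀ t ∈ Set.Icc (0:ℝ) 1, HasDerivAt f' (f'' t) t)
    (hm : ∀ t ∈ Set.Icc (0:ℝ) 1, m ≤ f'' t) : m / 2 ≤ f 1 - f 0 - f' 0 := by
  have A : ∀ F F' : ℝ → ℝ, (∀ t ∈ Set.Icc (0:ℝ) 1, HasDerivAt F (F' t) t) →
      (∀ t ∈ Set.Icc (0:ℝ) 1, 0 ≤ F' t) → ∀ t ∈ Set.Icc (0:ℝ) 1, F 0 ≤ F t := by
    intro F F' hF hF' t ht
    have : MonotoneOn F (Set.Icc 0 1) := by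
      refine monotoneOn_of_hasDerivWithinAt_nonneg (f' := F') (convex_Icc 0 1)
        (fun t ht => (hF t ht).continuousAt.continuousWithinAt)
        (fun t ht => (hF t (interior_subset ht)).hasDerivWithinAt)
        (fun t ht => hF' t (interior_subset ht))
    exact this (by simp) ht ht.1
  have B : ∀ t ∈ Set.Icc (0:ℝ) 1, f' 0 ≤ f' t - m * t := by
    intro t ht
    have := A (fun t => f' t - m * t) (fun t => f'' t - m * 1)
      (fun t ht => (h2 t ht).sub ((hasDerivAt_id t).const_mul m))
      (fun t ht => by have := hm t ht; linarith) t ht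
    simpa using this
  have := A (fun t => f t - f' 0 * t - m / 2 * t ^ 2)
    (fun t => f' t - f' 0 * 1 - m / 2 * ((2:ℕ) * t ^ (2-1) * 1))
    (fun t ht => ((h1 t ht).sub ((hasDerivAt_id t).const_mul (f' 0))).sub
      (((hasDerivAt_id t).pow 2).const_mul _))
    (fun t ht => by have := B t ht; norm_num; linarith) 1 (by simp)
  norm_num at this
  linarith

lemma sq_rpow {s : ℝ} (hs : 0 ≤ s) (p : ℝ) : (s ^ 2) ^ p = s ^ (2 * p) := by
  rw [← Real.rpow_natCast, ← Real.rpow_mul hs]; norm_num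

/-- the one-dimensional Taylor estimate for small jumps -/
lemma jump_est {E : Type*} [NormedAddCommGroup E] [InnerProductSpace ℝ E] (α : ℝ) (hα : 0 < α)
    (x y : E) (hx : 1 < ‖x‖) (hy : ‖y‖ < 1) :
    (α / 2) * ((‖x‖ + 1) ^ (-2 - α)
            - (2 + α) * (‖x‖ + 1) ^ 2 * (‖x‖ - 1) ^ (-4 - α)) * ‖y‖ ^ 2 ≤
      (1 - ‖x + y‖ ^ (-α)) - (1 - ‖x‖ ^ (-α)) - α * ‖x‖ ^ (-α - 2) * ⟪x, y⟫ ∧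
    (1 - ‖x + y‖ ^ (-α)) - (1 - ‖x‖ ^ (-α)) - α * ‖x‖ ^ (-α - 2) * ⟪x, y⟫ ≤
      (α / 2) * (‖x‖ - 1) ^ (-2 - α) * ‖y‖ ^ 2 := by
  set q : ℝ → ℝ := fun t => ‖x + t • y‖ ^ 2 with hq
  set q' : ℝ → ℝ := fun t => 2 * ⟪x + t • y, y⟫ with hq'
  have hqd : ∀ t, HasDerivAt q (q' t) t := by
    intro t
    have h : HasDerivAt (fun t : ℝ => x + t • y) y t := by
      simpa using ((hasDerivAt_id t).smul_const y).const_add x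
    exact h.norm_sq
  have hqd' : ∀ t, HasDerivAt q' (2 * ‖y‖ ^ 2) t := by
    intro t
    have h : HasDerivAt (fun t : ℝ => x + t • y) y t := by
      simpa using ((hasDerivAt_id t).smul_const y).const_add x
    have := (h.inner ℝ (hasDerivAt_const t y)).const_mul 2
    simpa using this
  have hn : ∀ t ∈ Set.Icc (0:ℝ) 1, ‖x‖ - 1 ≤ ‖x + t • y‖ ∧ ‖x + t • y‖ ≤ ‖x‖ + 1 := by
    intro t ht
    have h1 : ‖t • y‖ ≤ 1 := by
      rw [norm_smul, Real.norm_eq_abs, abs_of_nonneg ht.1]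
      nlinarith [ht.1, ht.2, norm_nonneg y]
    constructor
    · have := norm_sub_le (x + t • y) (t • y)
      rw [add_sub_cancel_right] at this
      linarith
    · linarith [norm_add_le x (t • y)]
  have hq0 : ∀ t ∈ Set.Icc (0:ℝ) 1, q t ≠ 0 := by
    intro t ht
    have := (hn t ht).1
    have : 0 < ‖x + t • y‖ := by linarith
    positivity
  set f : ℝ → ℝ := fun t => 1 - q t ^ (-α / 2)
  set f' : ℝ → ℝ := fun t => α / 2 * (q t ^ (-α / 2 - 1) * q' t)
  set f'' : ℝ → ℝ := fun t => α / 2 * ((q' t * (-α/2-1) * q t ^ (-α / 2 - 1 - 1)) * q' t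
    + q t ^ (-α / 2 - 1) * (2 * ‖y‖ ^ 2))
  have h1 : ∀ t ∈ Set.Icc (0:ℝ) 1, HasDerivAt f (f' t) t := by
    intro t ht
    have := ((hqd t).rpow_const (p := -α/2) (Or.inl (hq0 t ht))).const_sub 1
    refine this.congr_deriv ?_
    simp only [f']; ring
  have h2 : ∀ t ∈ Set.Icc (0:ℝ) 1, HasDerivAt f' (f'' t) t := by
    intro t ht
    exact ((((hqd t).rpow_const (p := -α/2-1) (Or.inl (hq0 t ht))).mul (hqd' t)).const_mul (α/2))
  have hf'' : ∀ t ∈ Set.Icc (0:ℝ) 1, f'' t =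
      α * (‖x + t • y‖ ^ (-2 - α) * ‖y‖ ^ 2
        - (2 + α) * ‖x + t • y‖ ^ (-4 - α) * ⟪x + t • y, y⟫ ^ 2) := by
    intro t ht
    simp only [f'', q, q']
    rw [sq_rpow (norm_nonneg _), sq_rpow (norm_nonneg _),
      show 2 * (-α / 2 - 1 - 1) = -4 - α by ring, show 2 * (-α / 2 - 1) = -2 - α by ring]
    ring
  have hend : f 1 - f 0 - f' 0 =
      (1 - ‖x + y‖ ^ (-α)) - (1 - ‖x‖ ^ (-α)) - α * ‖x‖ ^ (-α - 2) * ⟪x, y⟫ := by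
    simp only [f, f', q, q', one_smul, zero_smul, add_zero]
    rw [sq_rpow (norm_nonneg _), sq_rpow (norm_nonneg _), sq_rpow (norm_nonneg _),
      show 2 * (-α / 2 - 1) = -α - 2 by ring, show 2 * (-α / 2) = -α by ring]
    ring
  rw [← hend]
  constructor
  · have := taylor_lower f f' f'' (α * ((‖x‖ + 1) ^ (-2 - α)
            - (2 + α) * (‖x‖ + 1) ^ 2 * (‖x‖ - 1) ^ (-4 - α)) * ‖y‖ ^ 2) h1 h2 ?_
    · linarith
    · intro t ht
      rw [hf'' t ht]
      obtain ⟨ha, hb⟩ := hn t ht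
      set s := ‖x + t • y‖ with hs
      have hs0 : 0 < s := by linarith
      have e1 : (‖x‖ + 1) ^ (-2 - α) ≤ s ^ (-2 - α) :=
        Real.rpow_le_rpow_of_nonpos hs0 hb (by linarith)
      have e2 : s ^ (-4 - α) ≤ (‖x‖ - 1) ^ (-4 - α) :=
        Real.rpow_le_rpow_of_nonpos (by linarith) ha (by linarith)
      have e3 : ⟪x + t • y, y⟫ ^ 2 ≤ (‖x‖ + 1) ^ 2 * ‖y‖ ^ 2 := by
        rw [← mul_pow, ← sq_abs]
        gcongr
        exact (abs_real_inner_le_norm _ _).trans (by gcongr)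
      have e4 : s ^ (-4 - α) * ⟪x + t • y, y⟫ ^ 2 ≤
          (‖x‖ - 1) ^ (-4 - α) * ((‖x‖ + 1) ^ 2 * ‖y‖ ^ 2) := by
        gcongr
      have e5 : (‖x‖ + 1) ^ (-2 - α) * ‖y‖ ^ 2 ≤ s ^ (-2 - α) * ‖y‖ ^ 2 := by gcongr
      have e6 := mul_le_mul_of_nonneg_left e4 (show 0 ≤ 2 + α by linarith)
      rw [mul_assoc]
      refine mul_le_mul_of_nonneg_left ?_ hα.le
      linarith
  · have := taylor_lower (fun t => - f t) (fun t => - f' t) (fun t => - f'' t)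
      (-(α * (‖x‖ - 1) ^ (-2 - α) * ‖y‖ ^ 2)) (fun t ht => (h1 t ht).neg)
      (fun t ht => (h2 t ht).neg) ?_
    · linarith
    · intro t ht
      simp only [neg_le_neg_iff]
      rw [hf'' t ht]
      obtain ⟨ha, hb⟩ := hn t ht
      set s := ‖x + t • y‖ with hs
      have hs0 : 0 < s := by linarith
      have e1 : s ^ (-2 - α) ≤ (‖x‖ - 1) ^ (-2 - α) :=
        Real.rpow_le_rpow_of_nonpos (by linarith) ha (by linarith)
      have e5 : s ^ (-2 - α) * ‖y‖ ^ 2 ≤ (‖x‖ - 1) ^ (-2 - α) * ‖y‖ ^ 2 := by gcongr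
      have : 0 ≤ (2 + α) * s ^ (-4 - α) * ⟪x + t • y, y⟫ ^ 2 := by positivity
      rw [mul_assoc α ((‖x‖ - 1) ^ (-2 - α))]
      refine mul_le_mul_of_nonneg_left ?_ hα.le
      linarith

lemma hasFDerivAt_norm_rpow_aux {E : Type*} [NormedAddCommGroup E] [InnerProductSpace ℝ E] (p : ℝ)
    (z : E) (hz : z ≠ 0) :
    HasFDerivAt (fun z : E => ‖z‖ ^ p) ((p * ‖z‖ ^ (p - 2)) • innerSL ℝ z) z := by
  have h := ((hasStrictFDerivAt_norm_sq z).hasFDerivAt).rpow_const (p := p / 2)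
    (Or.inl (by simpa using hz))
  have e : (fun z : E => (‖z‖ ^ 2) ^ (p / 2)) = fun z : E => ‖z‖ ^ p := by
    funext z; rw [sq_rpow (norm_nonneg _)]; congr 1; ring
  rw [e] at h
  convert h using 1
  rw [sq_rpow (norm_nonneg _), show 2 * (p / 2 - 1) = p - 2 by ring]
  ext v
  simp
  ring

lemma w_derivs {E : Type*} [NormedAddCommGroup E] [InnerProductSpace ℝ E] (α r0 : ℝ)
    (hr0 : 1 < r0) (w : E → ℝ) (hw : ContDiff ℝ 2 w)
    (hwpow : ∀ z : E, r0 ≤ ‖z‖ → w z = 1 - ‖z‖ ^ (-α)) (x : E) (hx : r0 < ‖x‖) :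
    (∀ v, fderiv ℝ w x v = α * ‖x‖ ^ (-α - 2) * ⟪x, v⟫) ∧
    ∀ u v, iteratedFDeriv ℝ 2 w x ![u, v] =
      α * ‖x‖ ^ (-α - 2) * ⟪u, v⟫ - α * (α + 2) * ‖x‖ ^ (-α - 4) * ⟪x, u⟫ * ⟪x, v⟫ := by
  have op : IsOpen {z : E | r0 < ‖z‖} := isOpen_lt continuous_const continuous_norm
  have ne : ∀ z : E, r0 < ‖z‖ → z ≠ 0 := fun z hz h => by
    subst h; simp at hz; linarith
  have key : ∀ z : E, r0 < ‖z‖ → ∀ v, fderiv ℝ w z v = α * ‖z‖ ^ (-α - 2) * ⟪z, v⟫ := by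
    intro z hz v
    have ev : w =ᶠ[nhds z] fun z => 1 - ‖z‖ ^ (-α) := by
      filter_upwards [op.mem_nhds hz] with y hy using hwpow y (le_of_lt hy)
    have := ((hasFDerivAt_norm_rpow_aux (-α) z (ne z hz)).const_sub 1).congr_of_eventuallyEq ev
    rw [this.fderiv]
    simp
  refine ⟨key x hx, fun u v => ?_⟩
  rw [iteratedFDeriv_two_apply]
  simp only [Matrix.cons_val_zero, Matrix.cons_val_one]
  have hdd : DifferentiableAt ℝ (fderiv ℝ w) x :=
    ((hw.fderiv_right (m := 1) (by norm_num)).differentiable (by norm_num)) x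
  have hA : HasFDerivAt (fun z => fderiv ℝ w z v) ((fderiv ℝ (fderiv ℝ w) x).flip v) x := by
    have := hdd.hasFDerivAt.clm_apply (hasFDerivAt_const v x)
    simpa using this
  have ev : (fun z => fderiv ℝ w z v) =ᶠ[nhds x] fun z => (α * ‖z‖ ^ (-α - 2)) * ⟪z, v⟫ := by
    filter_upwards [op.mem_nhds hx] with y hy using key y hy v
  have hB := (((hasFDerivAt_norm_rpow_aux (-α - 2) x (ne x hx)).const_mul α).mul
    ((hasFDerivAt_id x).inner ℝ (hasFDerivAt_const v x))).congr_of_eventuallyEq ev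
  have := congrArg (fun L => L u) (hA.unique hB)
  simp only [ContinuousLinearMap.flip_apply] at this
  rw [this]
  simp
  rw [show -α - 2 - 2 = -α - 4 by ring]
  ring

theorem stmt_6 (d : ℕ) (hd : 1 ≤ d) (α r0 ε : ℝ) (hα : 0 < α) (hr0 : 1 < r0)
    (hε : 0 < ε) (hε1 : ε ≤ 1 - r0 ^ (-α))
    (x : EuclideanSpace ℝ (Fin d)) (hx : r0 + 1 ≤ ‖x‖)
    (a : ℝ) (ha : 0 ≤ a) (b : EuclideanSpace ℝ (Fin d))
    (c : Matrix (Fin d) (Fin d) ℝ) (hc : c.IsSymm)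
    (ν : Measure (EuclideanSpace ℝ (Fin d)))
    (hν0 : ν {0} = 0)
    (hνfin : ν ((Metric.ball (0 : EuclideanSpace ℝ (Fin d)) 1)ᶜ) < ⊤)
    (hνsq : IntegrableOn (fun y => ‖y‖ ^ 2)
      (Metric.ball (0 : EuclideanSpace ℝ (Fin d)) 1) ν)
    (w : EuclideanSpace ℝ (Fin d) → ℝ) (hw : ContDiff ℝ 2 w)
    (g : ℝ → ℝ) (hg : MonotoneOn g (Set.Ici 0)) (hwg : ∀ z, w z = g ‖z‖)
    (hw0 : w 0 = 1 - r0 ^ (-α) - ε)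
    (hwpow : ∀ z : EuclideanSpace ℝ (Fin d), r0 ≤ ‖z‖ → w z = 1 - ‖z‖ ^ (-α)) :
    Integrable (fun y => w (x + y) - w x
      - Set.indicator (Metric.ball (0 : EuclideanSpace ℝ (Fin d)) 1)
          (fun y => ⟪y, gradient w x⟫) y) ν ∧
    -a * (1 - ‖x‖ ^ (-α))
        + α * ‖x‖ ^ (-α) *
            ((1 / 2) * ‖x‖ ^ (-2 : ℝ) * c.trace
              - (1 + α / 2) * (‖x‖ ^ (-4 : ℝ) * ∑ i, ∑ j, c i j * x i * x j)
              + ‖x‖ ^ (-2 : ℝ) * ⟪x, b⟫)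
        + (α / 2) * ((‖x‖ + 1) ^ (-2 - α)
            - (2 + α) * (‖x‖ + 1) ^ 2 * (‖x‖ - 1) ^ (-4 - α)) *
            ∫ y in Metric.ball (0 : EuclideanSpace ℝ (Fin d)) 1, ‖y‖ ^ 2 ∂ν
        + ∫ y in (Metric.ball (0 : EuclideanSpace ℝ (Fin d)) 1)ᶜ,
            (Set.indicator {y : EuclideanSpace ℝ (Fin d) | r0 < ‖y + x‖}
                (fun y => 1 - ‖y + x‖ ^ (-α)) y
              + Set.indicator {y : EuclideanSpace ℝ (Fin d) | ‖y + x‖ ≤ r0}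
                  (fun _ => 1 - r0 ^ (-α) - ε) y
              - (1 - ‖x‖ ^ (-α))) ∂ν
      ≤ genL d a b c ν w x := by
  have hxr : r0 < ‖x‖ := by linarith
  have hx1 : 1 < ‖x‖ := by linarith
  have hx0 : 0 < ‖x‖ := by linarith
  obtain ⟨D1, D2⟩ := w_derivs α r0 hr0 w hw hwpow x hxr
  have hgrad : ∀ v, ⟪v, gradient w x⟫ = α * ‖x‖ ^ (-α - 2) * ⟪x, v⟫ := by
    intro v
    rw [← D1, real_inner_comm, gradient, InnerProductSpace.toDual_symm_apply]
  have hwx := hwpow x hxr.le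
  set U := Metric.ball (0 : EuclideanSpace ℝ (Fin d)) 1 with hU
  have hUm : MeasurableSet U := Metric.isOpen_ball.measurableSet
  set J : EuclideanSpace ℝ (Fin d) → ℝ := fun y => w (x + y) - w x
      - Set.indicator U (fun y => ⟪y, gradient w x⟫) y with hJ
  set K := (α / 2) * ((‖x‖ + 1) ^ (-2 - α)
            - (2 + α) * (‖x‖ + 1) ^ 2 * (‖x‖ - 1) ^ (-4 - α)) with hK
  set M := (α / 2) * (‖x‖ - 1) ^ (-2 - α) with hM
  have hJU : ∀ y ∈ U, K * ‖y‖ ^ 2 ≤ J y ∧ J y ≤ M * ‖y‖ ^ 2 := by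
    intro y hy
    have hy1 : ‖y‖ < 1 := by simpa [hU] using hy
    have hxy : r0 ≤ ‖x + y‖ := by
      have := norm_sub_le (x + y) y
      rw [add_sub_cancel_right] at this
      linarith
    have := jump_est α hα x y hx1 hy1
    simp only [hJ, Set.indicator_of_mem hy]
    rw [hgrad, hwpow _ hxy, hwx]
    exact this
  have hJm : Measurable J := by
    have h1 : Measurable (fun y => w (x + y)) := (hw.continuous.comp (by fun_prop)).measurable
    have h2 : Measurable (fun y : EuclideanSpace ℝ (Fin d) => ⟪y, gradient w x⟫) :=
      (show Continuous (fun y : EuclideanSpace ℝ (Fin d) => ⟪y, gradient w x⟫) by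
        fun_prop).measurable
    exact (h1.sub_const _).sub (h2.indicator hUm)
  have hw1 : ∀ z, w z ≤ 1 := by
    have h1 : ∀ z, r0 ≤ ‖z‖ → w z ≤ 1 := by
      intro z hz
      rw [hwpow z hz]
      have := Real.rpow_nonneg (norm_nonneg z) (-α)
      linarith
    intro z
    rcases le_total r0 ‖z‖ with hz | hz
    · exact h1 z hz
    · have h2 := h1 x hxr.le
      rw [hwg] at h2 ⊢
      exact (hg (norm_nonneg _) (norm_nonneg _) (by linarith)).trans h2
  have hwlow : ∀ z, w 0 ≤ w z := by
    intro z
    rw [hwg, hwg]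
    exact hg (norm_nonneg _) (norm_nonneg _) (by simp)
  have hw00 : 0 ≤ w 0 := by rw [hw0]; linarith
  have : IsFiniteMeasure (ν.restrict Uᶜ) := ⟨by simpa using hνfin⟩
  have hI1 : IntegrableOn J U ν := by
    have hb : IntegrableOn (fun y => (|K| + |M|) * ‖y‖ ^ 2) U ν := hνsq.const_mul _
    refine Integrable.mono' hb hJm.aestronglyMeasurable ?_
    refine (ae_restrict_iff' hUm).2 (Filter.Eventually.of_forall fun y hy => ?_)
    obtain ⟨h1, h2⟩ := hJU y hy
    have n : 0 ≤ ‖y‖ ^ 2 := by positivity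
    rw [Real.norm_eq_abs, abs_le]
    constructor
    · nlinarith [mul_nonneg (abs_nonneg M) n, mul_le_mul_of_nonneg_right (neg_abs_le K) n]
    · nlinarith [mul_nonneg (abs_nonneg K) n, mul_le_mul_of_nonneg_right (le_abs_self M) n]
  have hJc : ∀ y ∈ Uᶜ, J y = w (x + y) - w x := by
    intro y hy
    simp only [hJ]
    rw [Set.indicator_of_notMem hy, sub_zero]
  have hI2 : IntegrableOn J Uᶜ ν := by
    refine Integrable.of_bound hJm.aestronglyMeasurable 1 ?_
    refine (ae_restrict_iff' hUm.compl).2 (Filter.Eventually.of_forall fun y hy => ?_)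
    rw [hJc y hy, Real.norm_eq_abs, abs_le]
    constructor <;> linarith [hw1 x, hw1 (x + y), hwlow x, hwlow (x + y)]
  have hI : Integrable J ν := by
    rw [← integrableOn_univ, ← Set.union_compl_self U]
    exact hI1.union hI2
  refine ⟨hI, ?_⟩
  unfold genL
  rw [show (∫ y, (w (x + y) - w x - Set.indicator U (fun y => ⟪y, gradient w x⟫) y) ∂ν)
    = ∫ y, J y ∂ν from rfl, ← integral_add_compl hUm hI]
  have S1 : K * ∫ y in U, ‖y‖ ^ 2 ∂ν ≤ ∫ y in U, J y ∂ν := by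
    rw [← integral_const_mul]
    exact setIntegral_mono_on (hνsq.const_mul _) hI1 hUm (fun y hy => (hJU y hy).1)
  set R : EuclideanSpace ℝ (Fin d) → ℝ := fun y =>
    (Set.indicator {y : EuclideanSpace ℝ (Fin d) | r0 < ‖y + x‖}
                (fun y => 1 - ‖y + x‖ ^ (-α)) y
              + Set.indicator {y : EuclideanSpace ℝ (Fin d) | ‖y + x‖ ≤ r0}
                  (fun _ => 1 - r0 ^ (-α) - ε) y
              - (1 - ‖x‖ ^ (-α))) with hR
  have hRval : ∀ y, (r0 < ‖y + x‖ ∧ R y = w (x + y) - w x) ∨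
      (‖y + x‖ ≤ r0 ∧ R y = w 0 - w x) := by
    intro y
    rcases lt_or_ge r0 ‖y + x‖ with h | h
    · left
      refine ⟨h, ?_⟩
      simp only [hR, Set.indicator, Set.mem_setOf_eq, if_pos h, if_neg (not_le.2 h)]
      rw [hwx, hwpow (x + y) (by rw [add_comm]; exact h.le), add_comm y x]
      ring
    · right
      refine ⟨h, ?_⟩
      simp only [hR, Set.indicator, Set.mem_setOf_eq, if_pos h, if_neg (not_lt.2 h)]
      rw [hwx, hw0]
      ring
  have hRm : Measurable R := by
    have mn : Measurable (fun y : EuclideanSpace ℝ (Fin d) => ‖y + x‖) := by fun_prop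
    refine Measurable.sub_const (Measurable.add ?_ ?_) _
    · exact ((mn.pow_const (-α)).const_sub 1).indicator (measurableSet_lt measurable_const mn)
    · exact measurable_const.indicator (measurableSet_le mn measurable_const)
  have hIR : IntegrableOn R Uᶜ ν := by
    refine Integrable.of_bound hRm.aestronglyMeasurable 1 ?_
    refine Filter.Eventually.of_forall fun y => ?_
    rw [Real.norm_eq_abs, abs_le]
    rcases hRval y with h | h <;> rw [h.2] <;>
      constructor <;> linarith [hw1 x, hw1 (x + y), hwlow x, hwlow (x + y)]
  have S2 : ∫ y in Uᶜ, R y ∂ν ≤ ∫ y in Uᶜ, J y ∂ν := by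
    refine setIntegral_mono_on hIR hI2 hUm.compl (fun y hy => ?_)
    rw [hJc y hy]
    rcases hRval y with h | h <;> rw [h.2]
    linarith [hwlow (x + y)]
  have p2 : ‖x‖ ^ (-α) * ‖x‖ ^ (-2 : ℝ) = ‖x‖ ^ (-α - 2) := by
    rw [← Real.rpow_add hx0]; congr 1
  have p4 : ‖x‖ ^ (-α) * ‖x‖ ^ (-4 : ℝ) = ‖x‖ ^ (-α - 4) := by
    rw [← Real.rpow_add hx0]; congr 1
  have S3 : ∑ i, ∑ j, c i j *
        iteratedFDeriv ℝ 2 w x ![EuclideanSpace.single i 1, EuclideanSpace.single j 1]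
      = α * ‖x‖ ^ (-α - 2) * c.trace
        - α * (α + 2) * ‖x‖ ^ (-α - 4) * ∑ i, ∑ j, c i j * x i * x j := by
    have e : ∀ i j, c i j *
        iteratedFDeriv ℝ 2 w x ![EuclideanSpace.single i 1, EuclideanSpace.single j 1]
        = α * ‖x‖ ^ (-α - 2) * (if i = j then c i j else 0)
          - α * (α + 2) * ‖x‖ ^ (-α - 4) * (c i j * x i * x j) := by
      intro i j
      rw [D2]
      simp only [EuclideanSpace.inner_single_right, EuclideanSpace.inner_single_left]
      by_cases h : i = j
      · subst h; simp; ring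
      · simp [h]; ring
    simp only [e, Finset.sum_sub_distrib, ← Finset.mul_sum]
    congr 2
    simp [Matrix.trace]
  rw [S3, hgrad b, hwx]
  rw [← p2, ← p4]
  linarith
end

section
/- Let (E, 𝓔) be a measurable space, let π be a finite measure on E, and for each t > 0 let P_t be a Markov (probability) kernel from E to E such that for every B ∈ 𝓔 the map (t, x) ↦ P_t(x, B) is jointly measurable on (0,∞) × E. Assume π is invariant, i.e. for every t > 0 and every B ∈ 𝓔, ∫_E P_t(x, B) π(dx) = π(B). Assume further that there exist measurable sets B_j ∈ 𝓔, j ∈ ℕ, with ⋃_{j∈ℕ} B_j = E, and finite constants M_j ≥ 0 such that ∫_0^∞ P_t(x, B_j) dt ≤ M_j for all x ∈ E and all j ∈ ℕ. Then π is the zero measure. In particular, a transient Markov process cannot possess a nonzero finite invariant measure. -/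
open MeasureTheory

theorem stmt_7 {E : Type*} [MeasurableSpace E] (π : Measure E) [IsFiniteMeasure π]
    (P : ℝ → ProbabilityTheory.Kernel E E)
    (hMarkov : ∀ t : ℝ, 0 < t → ProbabilityTheory.IsMarkovKernel (P t))
    (hjm : ∀ B : Set E, MeasurableSet B →
      Measurable (fun p : {t : ℝ // 0 < t} × E => P p.1.1 p.2 B))
    (hinv : ∀ t : ℝ, 0 < t → ∀ B : Set E, MeasurableSet B →
      ∫⁻ x, P t x B ∂π = π B)
    (B : ℕ → Set E) (hBmeas : ∀ j, MeasurableSet (B j))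
    (hcover : ⋃ j, B j = Set.univ)
    (M : ℕ → ℝ) (hM : ∀ j, 0 ≤ M j)
    (hbound : ∀ x j, ∫⁻ t in Set.Ioi (0 : ℝ), P t x (B j) ≤ ENNReal.ofReal (M j)) :
    π = 0 := by
  have key : ∀ j, π (B j) = 0 := by
    intro j
    let φ : ℝ → {t : ℝ // 0 < t} := fun t =>
      ⟨if 0 < t then t else 1, by split_ifs with h <;> simp [*]⟩
    have hφ : Measurable φ :=
      Measurable.subtype_mk (Measurable.ite measurableSet_Ioi measurable_id measurable_const)
    have hf : Measurable (fun p : ℝ × E => P (φ p.1).1 p.2 (B j)) :=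
      (hjm (B j) (hBmeas j)).comp ((hφ.comp measurable_fst).prodMk measurable_snd)
    have hφe : ∀ t : ℝ, 0 < t → (φ t).1 = t := fun t ht => if_pos ht
    have h1 : ∫⁻ t in Set.Ioi (0 : ℝ), (∫⁻ x, P (φ t).1 x (B j) ∂π)
        = ∫⁻ x, (∫⁻ t in Set.Ioi (0 : ℝ), P (φ t).1 x (B j)) ∂π :=
      lintegral_lintegral_swap hf.aemeasurable
    have h2 : ∫⁻ t in Set.Ioi (0 : ℝ), (∫⁻ x, P (φ t).1 x (B j) ∂π) = π (B j) * ⊤ := by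
      have : ∀ t, ∫⁻ x, P (φ t).1 x (B j) ∂π = π (B j) :=
        fun t => hinv _ (φ t).2 _ (hBmeas j)
      simp only [this, lintegral_const, Measure.restrict_apply_univ, Real.volume_Ioi]
    have h3 : ∫⁻ x, (∫⁻ t in Set.Ioi (0 : ℝ), P (φ t).1 x (B j)) ∂π
        ≤ ENNReal.ofReal (M j) * π Set.univ := by
      rw [← lintegral_const]
      refine lintegral_mono fun x => ?_
      refine le_trans (le_of_eq ?_) (hbound x j)
      refine setLIntegral_congr_fun measurableSet_Ioi fun t ht => ?_
      simp only [hφe t ht]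
    by_contra h0
    rw [← h1, h2, ENNReal.mul_top h0] at h3
    exact absurd h3 (not_le.2 (ENNReal.mul_lt_top ENNReal.ofReal_lt_top (measure_lt_top π _)))
  rw [← Measure.measure_univ_eq_zero, ← hcover]
  exact measure_iUnion_null key
end

section
/- Let E be a topological space equipped with its Borel σ-algebra, and for each t > 0 let P_t be a sub-probability kernel from E to E (i.e. P_t(x, ·) is a measure with P_t(x, E) ≤ 1 and x ↦ P_t(x, B) is measurable for each Borel set B). Let g : E → [0, ∞] be lower semicontinuous and suppose that: (a) for every x ∈ E and every t > 0, ∫_E g(y) P_t(x, dy) ≤ g(x); (b) for every x ∈ E and every nonempty open set O ⊆ E there exists t > 0 with P_t(x, O) > 0. Then, if g(x_0) > 0 for some x_0 ∈ E, it follows that g(x) > 0 for every x ∈ E; equivalently, if g vanishes at some point of E, then g vanishes identically on E. -/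
open MeasureTheory
open scoped ENNReal

theorem stmt_8 {E : Type*} [TopologicalSpace E] [MeasurableSpace E] [BorelSpace E]
    (P : ℝ → ProbabilityTheory.Kernel E E)
    (hsub : ∀ t : ℝ, 0 < t → ∀ x : E, P t x Set.univ ≤ 1)
    (g : E → ℝ≥0∞) (hg : LowerSemicontinuous g)
    (ha : ∀ x : E, ∀ t : ℝ, 0 < t → ∫⁻ y, g y ∂(P t x) ≤ g x)
    (hb : ∀ x : E, ∀ O : Set E, IsOpen O → O.Nonempty → ∃ t : ℝ, 0 < t ∧ 0 < P t x O) :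
    (∃ x₀, 0 < g x₀) → ∀ x, 0 < g x := by
  rintro ⟨x₀, h₀⟩ x
  have hopen : IsOpen {y | 0 < g y} := hg.isOpen_preimage 0
  obtain ⟨t, ht, hpos⟩ := hb x {y | 0 < g y} hopen ⟨x₀, h₀⟩
  refine lt_of_lt_of_le ?_ (ha x t ht)
  rw [lintegral_pos_iff_support hg.measurable]
  refine lt_of_lt_of_le hpos (measure_mono ?_)
  intro y hy
  exact ne_of_gt hy
end
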